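/- Let n ≥ 1 and β ≥ 0. There is a constant C, depending only on n and β, such that for all smooth compactly supported functions f, g : ℝⁿ → ℂ, ‖ (−Δ)^{β/2}(fg) ‖_{L¹(ℝⁿ)} ≤ C ‖f‖_{W^{β,2}} ‖g‖_{W^{β,2}}. -/

import Mathlib

open MeasureTheory Filter Set
open scoped ENNReal RealInnerProductSpace

noncomputable section

abbrev Euc (n : ℕ) := EuclideanSpace ℝ (Fin n)

/-- The Japanese bracket `⟨x⟩ = (1+|x|²)^{1/2}`. -/
def jap {n : ℕ} (x : Euc n) : ℝ := Real.sqrt (1 + ‖x‖ ^ 2)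

/-- The Ewald sphere measure `σ_{rη}`: the `(n-1)`-dimensional Hausdorff measure restricted
to `Γ_r(η) = {ξ : |ξ - η/2| = r|η|/2}`. -/
def ewaldM (n : ℕ) (r : ℝ) (η : Euc n) : Measure (Euc n) :=
  (MeasureTheory.Measure.hausdorffMeasure ((n : ℝ) - 1)).restrict
    (Metric.sphere ((2 : ℝ)⁻¹ • η) (r * ‖η‖ / 2))

/-- The Fourier transform `f̂(ξ) = ∫ e^{-iξ·x} f(x) dx`. -/
def ft {n : ℕ} (f : Euc n → ℂ) (ξ : Euc n) : ℂ :=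
  ∫ x : Euc n, Complex.exp (-Complex.I * ((⟪ξ, x⟫ : ℝ) : ℂ)) * f x

/-- `⟨D⟩^β f`: inverse Fourier transform of `⟨ξ⟩^β f̂(ξ)`. -/
def besselD {n : ℕ} (β : ℝ) (f : Euc n → ℂ) (x : Euc n) : ℂ :=
  (((2 * Real.pi) ^ n : ℝ)⁻¹ : ℝ) •
    ∫ ξ : Euc n, Complex.exp (Complex.I * ((⟪ξ, x⟫ : ℝ) : ℂ)) *
      (((jap ξ ^ β : ℝ) : ℂ) * ft f ξ)

/-- The weighted Sobolev norm `‖f‖_{W^{β,2}_δ} = ‖⟨·⟩^δ ⟨D⟩^β f‖_{L²}`. -/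
def wSobNorm {n : ℕ} (β δ : ℝ) (f : Euc n → ℂ) : ℝ≥0∞ :=
  eLpNorm (fun x : Euc n => (jap x ^ δ : ℝ) • besselD β f x) 2 volume

/-- The spherical operator
`S_r(q)(η) = (2/(|η|(1+r))) ∫_{Γ_r(η)} q̂(ξ) q̂(η-ξ) dσ_{rη}(ξ)`. -/
def Sr {n : ℕ} (r : ℝ) (q : Euc n → ℂ) (η : Euc n) : ℂ :=
  ((2 / (‖η‖ * (1 + r))) : ℝ) • ∫ ξ, ft q ξ * ft q (η - ξ) ∂(ewaldM n r η)

/-- `K_r(g₁,g₂)(η) = (1/|η|) ∫_{Γ_r(η)} |g₁(ξ)||g₂(η-ξ)| dσ_{rη}(ξ)`. -/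
def Kr {n : ℕ} (r : ℝ) (g₁ g₂ : Euc n → ℂ) (η : Euc n) : ℝ :=
  ‖η‖⁻¹ * ∫ ξ, ‖g₁ ξ‖ * ‖g₂ (η - ξ)‖ ∂(ewaldM n r η)

/-- The fractional Laplacian `(-Δ)^{β/2} u = F⁻¹(|ξ|^β û(ξ))`. -/
def fracLap {n : ℕ} (β : ℝ) (u : Euc n → ℂ) (x : Euc n) : ℂ :=
  (((2 * Real.pi) ^ n : ℝ)⁻¹ : ℝ) •
    ∫ ξ : Euc n, Complex.exp (Complex.I * ((⟪ξ, x⟫ : ℝ) : ℂ)) *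
      (((‖ξ‖ ^ β : ℝ) : ℂ) * ft u ξ)


namespace Stmt11

/-- The size of the symbol of a first difference. -/
def kap {n : ℕ} (ξ y : Euc n) : ℝ :=
  ‖Complex.exp (((2 * Real.pi * ⟪ξ, y⟫ : ℝ) : ℂ) * Complex.I) - 1‖

lemma kap_nonneg {n : ℕ} (ξ y : Euc n) : 0 ≤ kap ξ y := norm_nonneg _

lemma kap_le_two {n : ℕ} (ξ y : Euc n) : kap ξ y ≤ 2 := by
  unfold kap
  refine (norm_sub_le _ _).trans ?_
  rw [Complex.norm_exp_ofReal_mul_I]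
  norm_num

lemma kap_le_mul {n : ℕ} (ξ y : Euc n) : kap ξ y ≤ 2 * Real.pi * ‖ξ‖ * ‖y‖ := by
  unfold kap
  rw [mul_comm _ Complex.I]
  refine (Real.norm_exp_I_mul_ofReal_sub_one_le (x := _)).trans ?_
  rw [Real.norm_eq_abs, abs_mul, abs_of_pos (by positivity : (0:ℝ) < 2 * Real.pi), mul_assoc (2 * Real.pi)]
  gcongr
  exact abs_real_inner_le_norm ξ y

lemma continuous_kap {n : ℕ} : Continuous (fun p : Euc n × Euc n => kap p.1 p.2) := by
  unfold kap
  fun_prop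

lemma continuous_kap_right {n : ℕ} (ξ : Euc n) : Continuous (fun y : Euc n => kap ξ y) := by
  unfold kap
  fun_prop

lemma integrable_kap {n : ℕ} (hn : 1 ≤ n) (j : ℕ) (s : ℝ) (hs : 0 < s) (hsj : s < 2 * j) (ξ : Euc n) :
    Integrable (fun y : Euc n => kap ξ y ^ (2 * j) * ‖y‖ ^ (-(n : ℝ) - s)) := by
  have : Nonempty (Fin n) := ⟨⟨0, hn⟩⟩
  have hmeas : Measurable (fun y : Euc n => kap ξ y ^ (2 * j) * ‖y‖ ^ (-(n : ℝ) - s)) := by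
    exact ((continuous_kap_right ξ).measurable.pow_const _).mul (measurable_norm.pow_const _)
  set M := 2 * Real.pi * ‖ξ‖ with hM
  have hM0 : 0 ≤ M := by positivity
  have key : Integrable (fun y : Euc n => (fun r : ℝ => (min 2 (M * r)) ^ (2 * j) * r ^ (-(n : ℝ) - s)) ‖y‖) := by
    rw [integrable_fun_norm_addHaar (volume : Measure (Euc n))
      (f := fun r : ℝ => (min 2 (M * r)) ^ (2 * j) * r ^ (-(n : ℝ) - s))]
    have hsplit : Ioi (0:ℝ) = Ioc 0 1 ∪ Ioi 1 := (Ioc_union_Ioi_eq_Ioi zero_le_one).symm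
    have hm : Measurable (fun r : ℝ => r ^ (Module.finrank ℝ (Euc n) - 1) • (min 2 (M * r) ^ (2 * j) * r ^ (-(n : ℝ) - s))) := by
      simp only [smul_eq_mul]
      fun_prop
    have hpow : ∀ r : ℝ, 0 < r → r ^ (n - 1) * r ^ (-(n : ℝ) - s) = r ^ (-1 - s) := by
      intro r hr
      rw [← Real.rpow_natCast, ← Real.rpow_add hr, Nat.cast_sub hn]
      congr 1
      push_cast
      ring
    rw [hsplit]
    refine IntegrableOn.union ?_ ?_
    · have h1 : IntegrableOn (fun r : ℝ => M ^ (2 * j) * r ^ ((2 * j : ℝ) - 1 - s)) (Ioc 0 1) := by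
        refine Integrable.const_mul ?_ _
        have := (intervalIntegral.intervalIntegrable_rpow' (a := 0) (b := 1) (r := (2 * j : ℝ) - 1 - s) (by linarith)).1
        exact this
      refine Integrable.mono' h1 hm.aestronglyMeasurable ?_
      refine (ae_restrict_iff' measurableSet_Ioc).2 (ae_of_all _ fun r hr => ?_)
      have hr0 := hr.1
      rw [smul_eq_mul, Real.norm_of_nonneg (by positivity)]
      rw [finrank_euclideanSpace_fin]
      calc r ^ (n - 1) * (min 2 (M * r) ^ (2 * j) * r ^ (-(n : ℝ) - s))
          ≤ r ^ (n - 1) * ((M * r) ^ (2 * j) * r ^ (-(n : ℝ) - s)) := by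
            gcongr
            exact min_le_right _ _
        _ = M ^ (2 * j) * (r ^ (2 * j) * (r ^ (n - 1) * r ^ (-(n : ℝ) - s))) := by ring
        _ = M ^ (2 * j) * r ^ ((2 * j : ℝ) - 1 - s) := by
            rw [hpow r hr0, ← Real.rpow_natCast r (2 * j), ← Real.rpow_add hr0]
            congr 2
            push_cast
            ring
    · have h1 : IntegrableOn (fun r : ℝ => 2 ^ (2 * j) * r ^ (-1 - s)) (Ioi 1) := by
        refine Integrable.const_mul ?_ _
        exact integrableOn_Ioi_rpow_of_lt (by linarith) one_pos
      refine Integrable.mono' h1 hm.aestronglyMeasurable ?_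
      refine (ae_restrict_iff' measurableSet_Ioi).2 (ae_of_all _ fun r hr => ?_)
      have hr0 : 0 < r := lt_trans one_pos hr
      rw [smul_eq_mul, Real.norm_of_nonneg (by positivity)]
      rw [finrank_euclideanSpace_fin]
      calc r ^ (n - 1) * (min 2 (M * r) ^ (2 * j) * r ^ (-(n : ℝ) - s))
          ≤ r ^ (n - 1) * (2 ^ (2 * j) * r ^ (-(n : ℝ) - s)) := by
            gcongr
            exact min_le_left _ _
        _ = 2 ^ (2 * j) * r ^ (-1 - s) := by rw [← hpow r hr0]; ring
  refine key.mono' hmeas.aestronglyMeasurable (ae_of_all _ fun y => ?_)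
  have := kap_nonneg ξ y
  rw [Real.norm_of_nonneg (by positivity)]
  simp only
  gcongr
  exact le_min (kap_le_two ξ y) (kap_le_mul ξ y)

lemma kap_scale {n : ℕ} (e ξ : Euc n) (he : ‖e‖ = 1) (hξ : ξ ≠ 0) :
    ∃ R : Euc n ≃ₗᵢ[ℝ] Euc n, ∀ z, kap ξ (‖ξ‖⁻¹ • R z) = kap e z := by
  have hξ0 : ‖ξ‖ ≠ 0 := norm_ne_zero_iff.2 hξ
  have h1 : ‖e‖ = ‖‖ξ‖⁻¹ • ξ‖ := by
    rw [norm_smul, norm_inv, norm_norm, inv_mul_cancel₀ hξ0, he]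
  refine ⟨(ℝ ∙ (e - ‖ξ‖⁻¹ • ξ))ᗮ.reflection, fun z => ?_⟩
  have h2 := Submodule.reflection_sub h1
  unfold kap
  have : ⟪ξ, ‖ξ‖⁻¹ • (ℝ ∙ (e - ‖ξ‖⁻¹ • ξ))ᗮ.reflection z⟫ = ⟪e, z⟫ := by
    rw [real_inner_smul_right, ← real_inner_smul_left]
    calc _ = ⟪(ℝ ∙ (e - ‖ξ‖⁻¹ • ξ))ᗮ.reflection e, (ℝ ∙ (e - ‖ξ‖⁻¹ • ξ))ᗮ.reflection z⟫ := by
          rw [h2]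
      _ = _ := LinearIsometryEquiv.inner_map_map _ _ _
  rw [this]

lemma kap_integral {n : ℕ} (hn : 1 ≤ n) (j : ℕ) (s : ℝ) (hs : 0 < s) (hsj : s < 2 * j) :
    ∃ c : ℝ, 0 < c ∧ ∀ ξ : Euc n,
      ∫ y : Euc n, kap ξ y ^ (2 * j) * ‖y‖ ^ (-(n : ℝ) - s) = c * ‖ξ‖ ^ s := by
  have hj : j ≠ 0 := by
    rintro rfl
    simp at hsj
    linarith
  set e : Euc n := EuclideanSpace.single ⟨0, hn⟩ 1 with he
  have he1 : ‖e‖ = 1 := by simp [he]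
  refine ⟨∫ y : Euc n, kap e y ^ (2 * j) * ‖y‖ ^ (-(n : ℝ) - s), ?_, fun ξ => ?_⟩
  · rw [integral_pos_iff_support_of_nonneg]
    · have hopen : IsOpen {y : Euc n | kap e y ≠ 0 ∧ y ≠ 0} := by
        refine IsOpen.inter ?_ isOpen_compl_singleton
        exact isOpen_ne_fun (continuous_kap_right e) continuous_const
      refine lt_of_lt_of_le (hopen.measure_pos volume ⟨(1/2 : ℝ) • e, ?_, ?_⟩) (measure_mono ?_)
      · unfold kap
        rw [real_inner_smul_right, real_inner_self_eq_norm_sq, he1]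
        have : (((2 * Real.pi * (1 / 2 * 1 ^ 2) : ℝ) : ℂ) * Complex.I) = Real.pi * Complex.I := by
          push_cast; ring
        rw [this, Complex.exp_pi_mul_I]
        norm_num
      · intro h
        have := congrArg norm h
        rw [norm_smul, he1] at this
        norm_num at this
      · rintro y ⟨h1, h2⟩
        have h3 : 0 < ‖y‖ := norm_pos_iff.2 h2
        exact mul_ne_zero (pow_ne_zero _ h1) (Real.rpow_pos_of_pos h3 _).ne'
    · intro y
      have := kap_nonneg e y
      show 0 ≤ _
      positivity
    · exact integrable_kap hn j s hs hsj e
  · by_cases hξ : ξ = 0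
    · subst hξ
      have : ∀ y : Euc n, kap 0 y = 0 := fun y => by simp [kap]
      simp [this, hj, Real.zero_rpow hs.ne']
    have hξ0 : 0 < ‖ξ‖ := norm_pos_iff.2 hξ
    obtain ⟨R, hR⟩ := kap_scale e ξ he1 hξ
    set Φ : Euc n → ℝ := fun y => kap ξ y ^ (2 * j) * ‖y‖ ^ (-(n : ℝ) - s) with hΦ
    have h1 : ∫ z, Φ (‖ξ‖⁻¹ • R z) = ∫ z, Φ (‖ξ‖⁻¹ • z) :=
      (R.measurePreserving).integral_comp R.toHomeomorph.measurableEmbedding (fun z => Φ (‖ξ‖⁻¹ • z))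
    have h2 := Measure.integral_comp_smul volume Φ (‖ξ‖⁻¹)
    rw [finrank_euclideanSpace_fin, smul_eq_mul] at h2
    have h3 : ∀ z, Φ (‖ξ‖⁻¹ • R z) = ‖ξ‖ ^ ((n : ℝ) + s) * (kap e z ^ (2 * j) * ‖z‖ ^ (-(n : ℝ) - s)) := by
      intro z
      simp only [hΦ]
      rw [hR, norm_smul, R.norm_map, norm_inv, norm_norm, Real.mul_rpow (by positivity) (by positivity),
        Real.inv_rpow hξ0.le, ← Real.rpow_neg hξ0.le]
      have : -(-(n:ℝ) - s) = n + s := by ring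
      rw [this]; ring
    simp_rw [h3] at h1
    rw [integral_const_mul, h2] at h1
    have h4 : |((‖ξ‖⁻¹) ^ n)⁻¹| = ‖ξ‖ ^ n := by
      rw [inv_pow, inv_inv, abs_of_nonneg (by positivity)]
    rw [h4, Real.rpow_add hξ0, Real.rpow_natCast, mul_assoc] at h1
    have := mul_left_cancel₀ (by positivity) h1
    rw [← this]; ring

lemma kap_lintegral {n : ℕ} (hn : 1 ≤ n) (j : ℕ) (s : ℝ) (hs : 0 < s) (hsj : s < 2 * j) :
    ∃ c : ℝ, 0 < c ∧ ∀ ξ : Euc n,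
      ∫⁻ y : Euc n, ENNReal.ofReal (kap ξ y ^ (2 * j) * ‖y‖ ^ (-(n : ℝ) - s))
        = ENNReal.ofReal (c * ‖ξ‖ ^ s) := by
  obtain ⟨c, hc, h⟩ := kap_integral hn j s hs hsj
  refine ⟨c, hc, fun ξ => ?_⟩
  rw [← h ξ, ofReal_integral_eq_lintegral_ofReal (integrable_kap hn j s hs hsj ξ)]
  refine ae_of_all _ fun y => ?_
  have := kap_nonneg ξ y
  show 0 ≤ _
  positivity

open FourierTransform SchwartzMap
open scoped ContDiff

lemma plancherel_inv {n : ℕ} (h : Euc n → ℂ) (h1 : Integrable h) (h2 : MemLp h 2 volume) :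
    eLpNorm (𝓕⁻ h) 2 volume = eLpNorm h 2 volume := by
  set H : Lp ℂ 2 (volume : Measure (Euc n)) := h2.toLp h with hH
  have hcont : Continuous (𝓕⁻ h) :=
    VectorFourier.fourierIntegral_continuous Real.continuous_fourierChar
      (by exact (continuous_inner (𝕜 := ℝ) (E := Euc n)).neg) h1
  have hae : ∀ᵐ x, (𝓕⁻ h) x = ((𝓕⁻ H : Lp ℂ 2 (volume : Measure (Euc n))) : Euc n → ℂ) x := by
    refine ae_eq_of_integral_contDiff_smul_eq hcont.locallyIntegrable
      ((Lp.memLp (𝓕⁻ H)).locallyIntegrable (by norm_num)) fun g g_smooth g_cpt => ?_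
    have hg₁ : HasCompactSupport (Complex.ofRealCLM ∘ g) := g_cpt.comp_left rfl
    have hg₂ : ContDiff ℝ ∞ (Complex.ofRealCLM ∘ g) := by fun_prop
    set G : 𝓢(Euc n, ℂ) := hg₁.toSchwartzMap hg₂ with hG
    have e1 : ∀ k : Euc n → ℂ, ∫ x, g x • k x = ∫ x, G x • k x := by
      intro k
      refine integral_congr_ae (ae_of_all _ fun x => ?_)
      simp [hG]
    rw [e1, e1, ← Lp.toTemperedDistribution_apply, ← Lp.fourierInv_toTemperedDistribution_eq,
      TemperedDistribution.fourierInv_apply, Lp.toTemperedDistribution_apply]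
    have e2 : ∫ x, (𝓕⁻ G) x • H x = ∫ x, (𝓕⁻ (G : Euc n → ℂ)) x • h x := by
      refine integral_congr_ae ?_
      filter_upwards [h2.coeFn_toLp] with x hx
      rw [hx, fourierInv_coe]
    rw [e2]
    have := VectorFourier.integral_fourierIntegral_smul_eq_flip (μ := (volume : Measure (Euc n)))
      (ν := (volume : Measure (Euc n))) (L := -innerₗ (Euc n)) (f := (G : Euc n → ℂ)) (g := h)
      Real.continuous_fourierChar (by exact (continuous_inner (𝕜 := ℝ) (E := Euc n)).neg)
      G.integrable h1
    refine Eq.trans ?_ this.symm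
    refine integral_congr_ae (ae_of_all _ fun x => ?_)
    have hfl : (-innerₗ (Euc n)).flip = -innerₗ (Euc n) := by
      ext a b
      simp [real_inner_comm]
    simp only [hfl]
    rfl
  rw [eLpNorm_congr_ae hae]
  have hn1 : ‖(𝓕⁻ H : Lp ℂ 2 (volume : Measure (Euc n)))‖ = ‖H‖ := by
    rw [← Lp.norm_fourier_eq (𝓕⁻ H), fourier_fourierInv_eq]
  rw [Lp.norm_def, Lp.norm_def, ENNReal.toReal_eq_toReal_iff' (Lp.eLpNorm_ne_top _) (Lp.eLpNorm_ne_top _)] at hn1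
  rw [hn1]
  exact eLpNorm_congr_ae h2.coeFn_toLp

lemma plancherel_schwartz {n : ℕ} (φ : 𝓢(Euc n, ℂ)) :
    eLpNorm (𝓕 (φ : Euc n → ℂ)) 2 volume = eLpNorm φ 2 volume := by
  have h := plancherel_inv (𝓕 (φ : Euc n → ℂ)) (by rw [← fourier_coe]; exact (𝓕 φ).integrable)
    (by rw [← fourier_coe]; exact (𝓕 φ).memLp 2)
  rw [← h, ← fourier_coe, ← fourierInv_coe, fourierInv_fourier_eq]

lemma rpow_le_one_add_pow (r β : ℝ) (hr : 0 ≤ r) (hβ : 0 ≤ β) (m : ℕ) (hm : β ≤ m) :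
    r ^ β ≤ 1 + r ^ m := by
  rcases le_total r 1 with h | h
  · have := Real.rpow_le_one hr h hβ
    have : 0 ≤ r ^ m := by positivity
    linarith
  · have := Real.rpow_le_rpow_of_exponent_le h hm
    rw [Real.rpow_natCast] at this
    linarith

lemma schwartz_weight_int {n : ℕ} (β : ℝ) (hβ : 0 ≤ β) (φ : 𝓢(Euc n, ℂ)) :
    Integrable (fun ξ => ((‖ξ‖ ^ β : ℝ) : ℂ) * φ ξ) := by
  obtain ⟨m, hm⟩ := exists_nat_ge β
  have hc : Continuous (fun ξ : Euc n => ‖ξ‖ ^ β) := continuous_norm.rpow_const fun _ => Or.inr hβ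
  refine Integrable.mono' (g := fun ξ => ‖φ ξ‖ + ‖ξ‖ ^ m * ‖φ ξ‖)
    (φ.integrable.norm.add (φ.integrable_pow_mul volume m)) ?_ (ae_of_all _ fun ξ => ?_)
  · exact (Complex.continuous_ofReal.comp hc).mul φ.continuous |>.aestronglyMeasurable
  · rw [norm_mul, Complex.norm_real, Real.norm_of_nonneg (by positivity)]
    have := rpow_le_one_add_pow ‖ξ‖ β (norm_nonneg _) hβ m hm
    nlinarith [norm_nonneg (φ ξ)]

lemma schwartz_weight_memLp {n : ℕ} (β : ℝ) (hβ : 0 ≤ β) (φ : 𝓢(Euc n, ℂ)) :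
    MemLp (fun ξ => ((‖ξ‖ ^ β : ℝ) : ℂ) * φ ξ) 2 volume := by
  have hc : Continuous (fun ξ : Euc n => ‖ξ‖ ^ β) := continuous_norm.rpow_const fun _ => Or.inr hβ
  have hm : Continuous (fun ξ => ((‖ξ‖ ^ β : ℝ) : ℂ) * φ ξ) :=
    (Complex.continuous_ofReal.comp hc).mul φ.continuous
  rw [memLp_two_iff_integrable_sq_norm hm.aestronglyMeasurable]
  obtain ⟨C, hC⟩ : ∃ C, ∀ ξ, ‖φ ξ‖ ≤ C := by
    obtain ⟨C, _, hC⟩ := φ.decay 0 0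
    exact ⟨C, fun ξ => by simpa using hC ξ⟩
  have h2 := ((schwartz_weight_int (2 * β) (by positivity) φ).norm).const_mul C
  refine h2.mono' (hm.norm.pow 2).aestronglyMeasurable (ae_of_all _ fun ξ => ?_)
  rw [Real.norm_of_nonneg (by positivity), norm_mul, norm_mul, Complex.norm_real, Complex.norm_real,
    Real.norm_of_nonneg (by positivity), Real.norm_of_nonneg (by positivity), mul_comm 2 β,
    Real.rpow_mul (norm_nonneg _), Real.rpow_two]
  have := hC ξ
  have h3 : 0 ≤ (‖ξ‖ ^ β) ^ 2 * ‖φ ξ‖ := by positivity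
  nlinarith

lemma fwdDiff_leibniz {M : Type*} [AddCommGroup M] (h : M) (f g : M → ℂ) (m : ℕ) (x : M) :
    (fwdDiff h)^[m] (fun x => f x * g x) x
      = ∑ i ∈ Finset.range (m + 1), (m.choose i : ℂ) *
        ((fwdDiff h)^[i] f (x + (m - i) • h) * (fwdDiff h)^[m - i] g x) := by
  classical
  set A := fwdDiff_aux.shiftₗ (M × M) ℂ (h, 0) with hA
  set B := fwdDiff_aux.shiftₗ (M × M) ℂ (0, h) with hB
  set C := fwdDiff_aux.shiftₗ (M × M) ℂ (h, h) with hC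
  have hAB : Commute A B := by
    refine LinearMap.ext fun G => funext fun p => ?_
    simp only [Module.End.mul_apply, hA, hB, fwdDiff_aux.shiftₗ_apply]
    congr 1
    abel
  have hCAB : C = A * B := by
    refine LinearMap.ext fun G => funext fun p => ?_
    simp only [Module.End.mul_apply, hA, hB, hC, fwdDiff_aux.shiftₗ_apply]
    congr 1
    rw [add_assoc]
    simp
  have dA : fwdDiff_aux.fwdDiffₗ (M × M) ℂ (h, 0) = A - 1 := by simp [hA, fwdDiff_aux.shiftₗ]
  have dB : fwdDiff_aux.fwdDiffₗ (M × M) ℂ (0, h) = B - 1 := by simp [hB, fwdDiff_aux.shiftₗ]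
  have dC : fwdDiff_aux.fwdDiffₗ (M × M) ℂ (h, h) = C - 1 := by simp [hC, fwdDiff_aux.shiftₗ]
  have hsum : C - 1 = (A - 1) + A * (B - 1) := by rw [hCAB]; noncomm_ring
  have hcom1 : Commute A (B - 1) := hAB.sub_right (Commute.one_right A)
  have hcom2 : Commute (A - 1) (A * (B - 1)) := by
    refine Commute.mul_right ?_ ?_
    · exact (Commute.refl A).sub_left (Commute.one_left A)
    · exact hcom1.sub_left (Commute.one_left _)
  have hcom3 : Commute (A - 1) A := (Commute.refl A).sub_left (Commute.one_left A)
  set F : M × M → ℂ := fun p => f p.1 * g p.2 with hF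
  have e1 : (fwdDiff h)^[m] (fun x => f x * g x) x = (fwdDiff (h, h))^[m] F (x, x) := by
    simp [fwdDiff_iter_eq_sum_shift, hF]
  have key : ((C - 1) ^ m) F (x, x) = ∑ i ∈ Finset.range (m + 1), (m.choose i : ℂ) *
      (((A - 1) ^ i * (B - 1) ^ (m - i)) F (x + (m - i) • h, x)) := by
    rw [hsum, hcom2.add_pow, LinearMap.sum_apply, Finset.sum_apply]
    refine Finset.sum_congr rfl fun i _ => ?_
    have e3 : (A - 1) ^ i * (A * (B - 1)) ^ (m - i) * ((m.choose i : ℕ) : Module.End ℤ (M × M → ℂ))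
        = ((m.choose i : ℕ) : Module.End ℤ (M × M → ℂ)) * (A ^ (m - i) * ((A - 1) ^ i * (B - 1) ^ (m - i))) := by
      rw [(Nat.cast_commute _ _).eq, hcom1.mul_pow, ← mul_assoc ((A - 1) ^ i),
        (hcom3.pow_pow i (m - i)).eq, mul_assoc (A ^ (m - i))]
    rw [e3, Module.End.mul_apply, Module.End.natCast_apply, Pi.smul_apply, nsmul_eq_mul,
      Module.End.mul_apply, hA, fwdDiff_aux.shiftₗ_pow_apply]
    simp
  rw [e1, ← fwdDiff_aux.coe_fwdDiffₗ, dC, ← Module.End.pow_apply, key]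
  refine Finset.sum_congr rfl fun i _ => ?_
  congr 1
  rw [← dA, ← dB, Module.End.mul_apply, Module.End.pow_apply, Module.End.pow_apply,
    fwdDiff_aux.coe_fwdDiffₗ, fwdDiff_aux.coe_fwdDiffₗ]
  have e4 : (fwdDiff ((0 : M), h))^[m - i] F = fun p => f p.1 * (fwdDiff h)^[m - i] g p.2 := by
    funext p
    simp only [fwdDiff_iter_eq_sum_shift, hF, Finset.mul_sum, Prod.fst_add, Prod.snd_add,
      Prod.smul_fst, Prod.smul_snd, smul_zero, add_zero, zsmul_eq_mul]
    refine Finset.sum_congr rfl fun l _ => ?_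
    ring
  rw [e4]
  set g' := (fwdDiff h)^[m - i] g
  simp only [fwdDiff_iter_eq_sum_shift, Finset.sum_mul, Prod.fst_add, Prod.snd_add,
      Prod.smul_fst, Prod.smul_snd, smul_zero, add_zero, zsmul_eq_mul]
  refine Finset.sum_congr rfl fun l _ => ?_
  ring

/-- Smooth compactly supported functions. -/
def IsTest {n : ℕ} (f : Euc n → ℂ) : Prop := ContDiff ℝ ∞ f ∧ HasCompactSupport f

lemma IsTest.shift {n : ℕ} {f : Euc n → ℂ} (hf : IsTest f) (v : Euc n) :
    IsTest (fun x => f (x + v)) :=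
  ⟨hf.1.comp (contDiff_id.add contDiff_const), hf.2.comp_homeomorph (Homeomorph.addRight v)⟩

lemma IsTest.mul {n : ℕ} {f g : Euc n → ℂ} (hf : IsTest f) (hg : IsTest g) :
    IsTest (fun x => f x * g x) := ⟨hf.1.mul hg.1, hf.2.mul_right⟩

lemma IsTest.fwdDiff {n : ℕ} {f : Euc n → ℂ} (hf : IsTest f) (v : Euc n) :
    IsTest (fwdDiff v f) :=
  ⟨(hf.shift v).1.sub hf.1, (hf.shift v).2.sub hf.2⟩

lemma IsTest.fwdDiff_iter {n : ℕ} {f : Euc n → ℂ} (hf : IsTest f) (v : Euc n) (j : ℕ) :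
    IsTest ((_root_.fwdDiff v)^[j] f) := by
  induction j with
  | zero => exact hf
  | succ j ih => rw [Function.iterate_succ_apply']; exact ih.fwdDiff v

lemma IsTest.integrable {n : ℕ} {f : Euc n → ℂ} (hf : IsTest f) : Integrable f :=
  hf.1.continuous.integrable_of_hasCompactSupport hf.2

/-- The associated Schwartz function. -/
def IsTest.sch {n : ℕ} {f : Euc n → ℂ} (hf : IsTest f) : 𝓢(Euc n, ℂ) := hf.2.toSchwartzMap hf.1

lemma IsTest.coe_sch {n : ℕ} {f : Euc n → ℂ} (hf : IsTest f) : (hf.sch : Euc n → ℂ) = f := rfl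

lemma IsTest.coe_fourier_sch {n : ℕ} {f : Euc n → ℂ} (hf : IsTest f) :
    ((𝓕 hf.sch : 𝓢(Euc n, ℂ)) : Euc n → ℂ) = 𝓕 f := by
  rw [fourier_coe, hf.coe_sch]

lemma IsTest.plancherel {n : ℕ} {f : Euc n → ℂ} (hf : IsTest f) :
    eLpNorm (𝓕 f) 2 volume = eLpNorm f 2 volume := plancherel_schwartz hf.sch

lemma IsTest.inversion {n : ℕ} {f : Euc n → ℂ} (hf : IsTest f) : 𝓕⁻ (𝓕 f) = f := by
  refine hf.1.continuous.fourierInv_fourier_eq hf.integrable ?_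
  rw [← hf.coe_fourier_sch]
  exact (𝓕 hf.sch).integrable

/-- The unimodular symbol of a translation. -/
def ech {n : ℕ} (ξ y : Euc n) : ℂ := Complex.exp (((2 * Real.pi * ⟪ξ, y⟫ : ℝ) : ℂ) * Complex.I)

lemma kap_eq {n : ℕ} (ξ y : Euc n) : kap ξ y = ‖ech ξ y - 1‖ := rfl

lemma norm_ech {n : ℕ} (ξ y : Euc n) : ‖ech ξ y‖ = 1 := Complex.norm_exp_ofReal_mul_I _

lemma fourier_shift {n : ℕ} (f : Euc n → ℂ) (v ξ : Euc n) :
    𝓕 (fun x => f (x + v)) ξ = ech ξ v * 𝓕 f ξ := by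
  have := congrFun (VectorFourier.fourierIntegral_comp_add_right Real.fourierChar
    (volume : Measure (Euc n)) (innerₗ (Euc n)) f v) ξ
  refine Eq.trans this ?_
  rw [Circle.smul_def, Real.fourierChar_apply, smul_eq_mul]
  simp only [innerₗ_apply_apply, ech, real_inner_comm]
  rfl

lemma fourier_fwdDiff {n : ℕ} {f : Euc n → ℂ} (hf : IsTest f) (v ξ : Euc n) :
    𝓕 (fwdDiff v f) ξ = (ech ξ v - 1) * 𝓕 f ξ := by
  have h1 : 𝓕 (fwdDiff v f) ξ = 𝓕 (fun x => f (x + v)) ξ - 𝓕 f ξ := by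
    simp only [Real.fourier_eq]
    rw [← integral_sub]
    · refine integral_congr_ae (ae_of_all _ fun x => ?_)
      simp only [fwdDiff, smul_sub]
    · exact (Real.fourierIntegral_convergent_iff ξ).2 (hf.shift v).integrable
    · exact (Real.fourierIntegral_convergent_iff ξ).2 hf.integrable
  rw [h1, fourier_shift]; ring

lemma fourier_fwdDiff_iter {n : ℕ} {f : Euc n → ℂ} (hf : IsTest f) (v ξ : Euc n) (j : ℕ) :
    𝓕 ((fwdDiff v)^[j] f) ξ = (ech ξ v - 1) ^ j * 𝓕 f ξ := by
  induction j with
  | zero => simp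
  | succ j ih =>
    rw [Function.iterate_succ_apply', fourier_fwdDiff (hf.fwdDiff_iter v j), ih]; ring

/-- Centered even difference. -/
def Dk {n : ℕ} (k : ℕ) (f : Euc n → ℂ) (y x : Euc n) : ℂ :=
  (-1) ^ k * (fwdDiff y)^[2 * k] f (x + (-(k • y)))

lemma isTest_Dk {n : ℕ} (k : ℕ) {f : Euc n → ℂ} (hf : IsTest f) (y : Euc n) : IsTest (Dk k f y) := by
  have := (hf.fwdDiff_iter y (2 * k)).shift (-(k • y))
  exact ⟨contDiff_const.mul this.1, this.2.mul_left⟩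

lemma ech_neg_nsmul {n : ℕ} (k : ℕ) (ξ y : Euc n) : ech ξ (-(k • y)) = (ech ξ y)⁻¹ ^ k := by
  unfold ech
  rw [← Complex.exp_neg, ← Complex.exp_nat_mul]
  congr 1
  rw [inner_neg_right, ← Nat.cast_smul_eq_nsmul ℝ, real_inner_smul_right]
  push_cast
  ring

lemma ech_sq {n : ℕ} (ξ y : Euc n) :
    -((ech ξ y)⁻¹ * (ech ξ y - 1) ^ 2) = ((kap ξ y ^ 2 : ℝ) : ℂ) := by
  have h0 : ech ξ y ≠ 0 := Complex.exp_ne_zero _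
  have hc : (starRingEnd ℂ) (ech ξ y) = (ech ξ y)⁻¹ := by
    rw [Complex.inv_def, Complex.normSq_eq_norm_sq, norm_ech]; simp
  rw [kap_eq, Complex.ofReal_pow, ← Complex.mul_conj', map_sub, hc, map_one]
  field_simp
  ring

lemma fourier_Dk {n : ℕ} (k : ℕ) {f : Euc n → ℂ} (hf : IsTest f) (y ξ : Euc n) :
    𝓕 (Dk k f y) ξ = ((kap ξ y ^ (2 * k) : ℝ) : ℂ) * 𝓕 f ξ := by
  have h1 : 𝓕 (Dk k f y) ξ = (-1) ^ k * 𝓕 (fun x => (fwdDiff y)^[2 * k] f (x + (-(k • y)))) ξ := by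
    simp only [Real.fourier_eq]
    rw [← integral_const_mul]
    refine integral_congr_ae (ae_of_all _ fun x => ?_)
    simp only [Dk, Circle.smul_def, smul_eq_mul]
    ring
  rw [h1, fourier_shift, fourier_fwdDiff_iter hf, ech_neg_nsmul, pow_mul, pow_mul,
    Complex.ofReal_pow, ← ech_sq]
  rw [neg_pow ((ech ξ y)⁻¹ * (ech ξ y - 1) ^ 2), mul_pow]
  ring

/-- Fractional power of the Laplacian, Mathlib normalization. -/
def L0 {n : ℕ} (β : ℝ) (u : Euc n → ℂ) : Euc n → ℂ :=
  𝓕⁻ (fun ξ => ((‖ξ‖ ^ β : ℝ) : ℂ) * 𝓕 u ξ)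

lemma eLpNorm_L0 {n : ℕ} (β : ℝ) (hβ : 0 ≤ β) {u : Euc n → ℂ} (hu : IsTest u) :
    eLpNorm (L0 β u) 2 volume = eLpNorm (fun ξ => ((‖ξ‖ ^ β : ℝ) : ℂ) * 𝓕 u ξ) 2 volume := by
  refine plancherel_inv _ ?_ ?_
  · rw [← hu.coe_fourier_sch]; exact schwartz_weight_int β hβ _
  · rw [← hu.coe_fourier_sch]; exact schwartz_weight_memLp β hβ _

lemma continuous_L0 {n : ℕ} (β : ℝ) (hβ : 0 ≤ β) {u : Euc n → ℂ} (hu : IsTest u) :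
    Continuous (L0 β u) := by
  refine VectorFourier.fourierIntegral_continuous Real.continuous_fourierChar
      (by exact (continuous_inner (𝕜 := ℝ) (E := Euc n)).neg) ?_
  rw [← hu.coe_fourier_sch]; exact schwartz_weight_int β hβ _

lemma rep {n : ℕ} (hn : 1 ≤ n) (k : ℕ) (β : ℝ) (hβ : 0 < β) (hk : β < 2 * k) (c : ℝ)
    (hc : ∀ ξ : Euc n, ∫ y : Euc n, kap ξ y ^ (2 * k) * ‖y‖ ^ (-(n : ℝ) - β) = c * ‖ξ‖ ^ β)
    {u : Euc n → ℂ} (hu : IsTest u) (x : Euc n) :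
    Integrable (fun y : Euc n => ((‖y‖ ^ (-(n : ℝ) - β) : ℝ) : ℂ) * Dk k u y x) ∧
    ∫ y : Euc n, ((‖y‖ ^ (-(n : ℝ) - β) : ℝ) : ℂ) * Dk k u y x = c * L0 β u x := by
  set K : Euc n → Euc n → ℂ := fun ξ y => ech ξ x *
    (((kap ξ y ^ (2 * k) * ‖y‖ ^ (-(n : ℝ) - β) : ℝ) : ℂ) * 𝓕 u ξ) with hK
  have hFc : Continuous (𝓕 u) := by rw [← hu.coe_fourier_sch]; exact (𝓕 hu.sch).continuous
  have hech : Continuous (fun ξ : Euc n => ech ξ x) := by unfold ech; fun_prop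
  have hKm : Measurable (fun p : Euc n × Euc n => K p.1 p.2) := by
    simp only [hK]
    refine (hech.measurable.comp measurable_fst).mul ((Complex.measurable_ofReal.comp ?_).mul
      (hFc.measurable.comp measurable_fst))
    exact (continuous_kap.measurable.pow_const _).mul ((measurable_norm.comp measurable_snd).pow_const _)
  have hKn : ∀ ξ y, ‖K ξ y‖ = kap ξ y ^ (2 * k) * ‖y‖ ^ (-(n : ℝ) - β) * ‖𝓕 u ξ‖ := by
    intro ξ y
    have := kap_nonneg ξ y
    simp only [hK]
    rw [norm_mul, norm_ech, one_mul, norm_mul, Complex.norm_real, Real.norm_of_nonneg (by positivity)]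
  have hKint : Integrable (Function.uncurry K) (volume.prod volume) := by
    rw [integrable_prod_iff (by exact hKm.aestronglyMeasurable)]
    constructor
    · refine ae_of_all _ fun ξ => ?_
      simp only [Function.uncurry, hK]
      exact ((integrable_kap hn k β hβ hk ξ).ofReal.mul_const _).const_mul _
    · simp only [Function.uncurry, hKn]
      simp_rw [integral_mul_const, hc]
      have := (schwartz_weight_int β hβ.le (𝓕 hu.sch)).norm.const_mul c
      refine this.congr (ae_of_all _ fun ξ => ?_)
      simp only
      rw [hu.coe_fourier_sch, norm_mul, Complex.norm_real, Real.norm_of_nonneg (by positivity)]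
      ring
  have e1 : ∀ y, ∫ ξ, K ξ y = ((‖y‖ ^ (-(n : ℝ) - β) : ℝ) : ℂ) * Dk k u y x := by
    intro y
    rw [← congrFun (isTest_Dk k hu y).inversion x, Real.fourierInv_eq', ← integral_const_mul]
    refine integral_congr_ae (ae_of_all _ fun ξ => ?_)
    simp only [hK, fourier_Dk k hu, smul_eq_mul, ech]
    push_cast
    ring
  have e2 : ∀ ξ, ∫ y, K ξ y = c * (ech ξ x * (((‖ξ‖ ^ β : ℝ) : ℂ) * 𝓕 u ξ)) := by
    intro ξ
    simp only [hK]
    rw [integral_const_mul, integral_mul_const, integral_complex_ofReal, hc]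
    push_cast
    ring
  constructor
  · have := hKint.integral_prod_right
    refine this.congr (ae_of_all _ fun y => ?_)
    exact e1 y
  · simp_rw [← e1]
    rw [← integral_integral_swap hKint]
    simp_rw [e2]
    rw [integral_const_mul, L0, Real.fourierInv_eq']
    rfl

/-- The remainder in the product rule. -/
lemma Dk_mul {n : ℕ} (k : ℕ) (hk : 1 ≤ k) (f g : Euc n → ℂ) (y x : Euc n) :
    Dk k (fun x => f x * g x) y x - f x * Dk k g y x - g x * Dk k f y x
      = fwdDiff (k • y) f x * Dk k g y x
        - Dk k f y x * fwdDiff (k • y) g (x + (-(k • y)))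
        + (-1) ^ k * ∑ i ∈ Finset.Ico 1 (2 * k), ((2 * k).choose i : ℂ) *
          ((fwdDiff y)^[i] f (x + (-(k • y) + (2 * k - i) • y)) *
            (fwdDiff y)^[2 * k - i] g (x + (-(k • y)))) := by
  have h1 : x + (-(k • y)) + (2 * k) • y = x + k • y := by
    rw [two_mul, add_smul]; abel
  have h2 := fwdDiff_leibniz y f g (2 * k) (x + (-(k • y)))
  rw [Finset.sum_range_succ, Finset.range_eq_Ico, Finset.sum_eq_sum_Ico_succ_bot (by omega)] at h2
  simp only [Nat.choose_zero_right, Nat.choose_self, Nat.sub_zero, Nat.sub_self, zero_smul, add_zero,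
    Function.iterate_zero, id_eq, Nat.cast_one, one_mul, zero_add, h1] at h2
  simp only [← add_assoc]
  have h3 : x + -(k • y) + k • y = x := by abel
  simp only [Dk, fwdDiff, h3] at h2 ⊢
  rw [h2]
  ring

/-- The Sobolev norm in Mathlib normalization. -/
def W {n : ℕ} (β : ℝ) (f : Euc n → ℂ) : ℝ≥0∞ :=
  eLpNorm (fun ξ : Euc n => (jap ((2 * Real.pi) • ξ) ^ β : ℝ) • 𝓕 f ξ) 2 volume

lemma one_le_jap {n : ℕ} (x : Euc n) : 1 ≤ jap x := by
  unfold jap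
  rw [Real.one_le_sqrt]
  nlinarith [sq_nonneg ‖x‖]

lemma norm_le_jap {n : ℕ} (x : Euc n) : ‖x‖ ≤ jap ((2 * Real.pi) • x) := by
  unfold jap
  refine Real.le_sqrt_of_sq_le ?_
  rw [norm_smul, mul_pow, Real.norm_of_nonneg (by positivity)]
  have := Real.pi_gt_three
  have h2 : (1:ℝ) ≤ (2 * Real.pi) ^ 2 := by nlinarith
  nlinarith [sq_nonneg ‖x‖]

lemma rpow_le_jap {n : ℕ} (x : Euc n) (s b : ℝ) (hs : 0 ≤ s) (hb : s ≤ b) :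
    ‖x‖ ^ s ≤ jap ((2 * Real.pi) • x) ^ b :=
  (Real.rpow_le_rpow (norm_nonneg _) (norm_le_jap x) hs).trans
    (Real.rpow_le_rpow_of_exponent_le (one_le_jap _) hb)

lemma eLpNorm_two {n : ℕ} (f : Euc n → ℂ) :
    eLpNorm f 2 volume = (∫⁻ x, ‖f x‖ₑ ^ (2:ℝ)) ^ (1 / 2 : ℝ) := by
  rw [eLpNorm_eq_lintegral_rpow_enorm_toReal (by norm_num) (by norm_num)]
  simp

lemma W_sq {n : ℕ} (β : ℝ) (f : Euc n → ℂ) :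
    W β f ^ (2:ℝ) = ∫⁻ ξ, (ENNReal.ofReal (jap ((2 * Real.pi) • ξ) ^ (2 * β)) * ‖𝓕 f ξ‖ₑ ^ (2:ℝ)) := by
  rw [W, eLpNorm_two, ← ENNReal.rpow_mul]
  norm_num
  refine lintegral_congr fun ξ => ?_
  have h1 := one_le_jap ((2 * Real.pi) • ξ)
  have h2 : ‖((jap ((2 * Real.pi) • ξ) ^ β : ℝ) : ℂ)‖ₑ = ENNReal.ofReal (jap ((2 * Real.pi) • ξ) ^ β) := by
    rw [← ofReal_norm, Complex.norm_real, Real.norm_of_nonneg (by positivity)]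
  rw [h2, mul_pow, ← ENNReal.ofReal_pow (by positivity),
    mul_comm 2 β, Real.rpow_mul (by positivity), Real.rpow_two]

lemma plancherel_sq {n : ℕ} {f : Euc n → ℂ} (hf : IsTest f) :
    ∫⁻ x, ‖f x‖ₑ ^ (2:ℝ) = ∫⁻ ξ, ‖𝓕 f ξ‖ₑ ^ (2:ℝ) := by
  have h := hf.plancherel
  rw [eLpNorm_two, eLpNorm_two] at h
  exact ((ENNReal.rpow_left_injective (by norm_num : (1/2:ℝ) ≠ 0)) h).symm

lemma eLpNorm_L0_le {n : ℕ} (β : ℝ) (hβ : 0 ≤ β) {u : Euc n → ℂ} (hu : IsTest u) :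
    eLpNorm (L0 β u) 2 volume ≤ W β u := by
  rw [eLpNorm_L0 β hβ hu, W]
  refine eLpNorm_mono fun ξ => ?_
  have h1 := one_le_jap ((2 * Real.pi) • ξ)
  rw [norm_smul, norm_mul, Complex.norm_real, Real.norm_of_nonneg (by positivity),
    Real.norm_of_nonneg (by positivity)]
  exact mul_le_mul_of_nonneg_right (rpow_le_jap ξ β β hβ le_rfl) (norm_nonneg _)

lemma eLpNorm_le_W {n : ℕ} (β : ℝ) (hβ : 0 ≤ β) {u : Euc n → ℂ} (hu : IsTest u) :
    eLpNorm u 2 volume ≤ W β u := by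
  rw [← hu.plancherel, W]
  refine eLpNorm_mono fun ξ => ?_
  have h1 := one_le_jap ((2 * Real.pi) • ξ)
  rw [norm_smul, Real.norm_of_nonneg (by positivity)]
  have := Real.one_le_rpow h1 hβ
  nlinarith [norm_nonneg (𝓕 u ξ)]

lemma kap_nsmul {n : ℕ} (k : ℕ) (ξ y : Euc n) : kap ξ (k • y) = kap (k • ξ) y := by
  unfold kap
  rw [← Nat.cast_smul_eq_nsmul ℝ, ← Nat.cast_smul_eq_nsmul ℝ, real_inner_smul_right,
    real_inner_smul_left]

lemma continuous_diff {n : ℕ} {f : Euc n → ℂ} (hf : Continuous f) (k j : ℕ) (v : Euc n → Euc n)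
    (hv : Continuous v) :
    Continuous (fun p : Euc n × Euc n => (fwdDiff (k • p.1))^[j] f (p.2 + v p.1)) := by
  simp only [fwdDiff_iter_eq_sum_shift]
  fun_prop

lemma Q_bound {n : ℕ} (hn : 1 ≤ n) (k j : ℕ) (β s : ℝ) (hs : 0 < s) (hsj : s < 2 * j)
    (hsβ : s ≤ 2 * β) :
    ∃ C : ℝ≥0∞, C ≠ ⊤ ∧ ∀ f : Euc n → ℂ, IsTest f → ∀ v : Euc n → Euc n, Continuous v →
      ∫⁻ p : Euc n × Euc n, (ENNReal.ofReal (‖p.1‖ ^ ((-(n : ℝ) - s) / 2)) *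
        ‖(fwdDiff (k • p.1))^[j] f (p.2 + v p.1)‖ₑ) ^ (2:ℝ) ∂(volume.prod volume)
      ≤ C * W β f ^ (2:ℝ) := by
  obtain ⟨c, hc, hcc⟩ := kap_lintegral hn j s hs hsj
  refine ⟨ENNReal.ofReal (c * (k:ℝ) ^ s), ENNReal.ofReal_ne_top, fun f hf v hv => ?_⟩
  have hwm : Measurable (fun y : Euc n => ENNReal.ofReal (‖y‖ ^ ((-(n : ℝ) - s) / 2))) :=
    (measurable_norm.pow_const _).ennreal_ofReal
  have hFc : Continuous (𝓕 f) := by rw [← hf.coe_fourier_sch]; exact (𝓕 hf.sch).continuous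
  have hm : Measurable (fun p : Euc n × Euc n => (ENNReal.ofReal (‖p.1‖ ^ ((-(n : ℝ) - s) / 2)) *
        ‖(fwdDiff (k • p.1))^[j] f (p.2 + v p.1)‖ₑ) ^ (2:ℝ)) :=
    ((hwm.comp measurable_fst).mul
      (continuous_diff hf.1.continuous k j v hv).measurable.enorm).pow_const _
  rw [lintegral_prod _ hm.aemeasurable]
  have e1 : ∀ y : Euc n, ∫⁻ x : Euc n, (ENNReal.ofReal (‖y‖ ^ ((-(n : ℝ) - s) / 2)) *
        ‖(fwdDiff (k • y))^[j] f (x + v y)‖ₑ) ^ (2:ℝ)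
      = ∫⁻ ξ : Euc n, ENNReal.ofReal (kap (k • ξ) y ^ (2 * j) * ‖y‖ ^ (-(n : ℝ) - s)) * ‖𝓕 f ξ‖ₑ ^ (2:ℝ) := by
    intro y
    have hw2 : ENNReal.ofReal (‖y‖ ^ ((-(n : ℝ) - s) / 2)) ^ (2:ℝ) = ENNReal.ofReal (‖y‖ ^ (-(n : ℝ) - s)) := by
      rw [ENNReal.ofReal_rpow_of_nonneg (by positivity) (by norm_num), ← Real.rpow_mul (norm_nonneg _)]
      congr 2
      ring
    simp_rw [ENNReal.mul_rpow_of_nonneg _ _ (by norm_num : (0:ℝ) ≤ 2), hw2]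
    rw [lintegral_const_mul' _ _ ENNReal.ofReal_ne_top,
      lintegral_add_right_eq_self (fun x => ‖(fwdDiff (k • y))^[j] f x‖ₑ ^ (2:ℝ)) (v y),
      plancherel_sq (hf.fwdDiff_iter (k • y) j), ← lintegral_const_mul' _ _ ENNReal.ofReal_ne_top]
    refine lintegral_congr fun ξ => ?_
    have hk0 := kap_nonneg (k • ξ) y
    have h3 : ‖ech ξ (k • y) - 1‖ₑ = ENNReal.ofReal (kap (k • ξ) y) := by
      rw [← kap_nsmul, kap_eq, ofReal_norm]
    rw [fourier_fwdDiff_iter hf, enorm_mul, enorm_pow, h3,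
      ENNReal.mul_rpow_of_nonneg _ _ (by norm_num : (0:ℝ) ≤ 2), mul_comm (kap (k • ξ) y ^ (2 * j)),
      ENNReal.ofReal_mul (by positivity), mul_assoc, mul_comm 2 j, pow_mul _ j 2,
      ENNReal.ofReal_pow (by positivity), ENNReal.ofReal_pow (by positivity), ENNReal.rpow_two]
  simp_rw [e1]
  rw [lintegral_lintegral_swap]
  · have e2 : ∀ ξ : Euc n, ∫⁻ y : Euc n, ENNReal.ofReal (kap (k • ξ) y ^ (2 * j) * ‖y‖ ^ (-(n : ℝ) - s)) * ‖𝓕 f ξ‖ₑ ^ (2:ℝ)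
        = ENNReal.ofReal (c * ‖k • ξ‖ ^ s) * ‖𝓕 f ξ‖ₑ ^ (2:ℝ) := by
      intro ξ
      rw [lintegral_mul_const' _ _ (by simp), hcc]
    simp_rw [e2]
    rw [W_sq, ← lintegral_const_mul' _ _ ENNReal.ofReal_ne_top]
    refine lintegral_mono fun ξ => ?_
    rw [← mul_assoc, ← ENNReal.ofReal_mul (by positivity)]
    refine mul_le_mul_left (ENNReal.ofReal_le_ofReal ?_) _
    rw [← Nat.cast_smul_eq_nsmul ℝ, norm_smul, Real.norm_of_nonneg (by positivity),
      Real.mul_rpow (by positivity) (by positivity), ← mul_assoc]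
    exact mul_le_mul_of_nonneg_left (rpow_le_jap ξ s (2 * β) hs.le hsβ) (by positivity)
  · refine Measurable.aemeasurable ?_
    have hk1 : Measurable (fun p : Euc n × Euc n => kap (k • p.2) p.1) := by
      unfold kap
      have : Continuous (fun p : Euc n × Euc n => ‖Complex.exp (((2 * Real.pi * ⟪k • p.2, p.1⟫ : ℝ) : ℂ) * Complex.I) - 1‖) := by
        fun_prop
      exact this.measurable
    refine Measurable.mul (Measurable.ennreal_ofReal ?_) ?_
    · exact (hk1.pow_const _).mul ((measurable_norm.comp measurable_fst).pow_const _)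
    · exact ((hFc.measurable.comp measurable_snd).enorm).pow_const _

/-- The integrand of the bilinear remainder terms. -/
def FF {n : ℕ} (β : ℝ) (k₁ j₁ k₂ j₂ : ℕ) (f g : Euc n → ℂ) (v w : Euc n → Euc n)
    (p : Euc n × Euc n) : ℝ≥0∞ :=
  ENNReal.ofReal (‖p.1‖ ^ (-(n : ℝ) - β)) *
    (‖(fwdDiff (k₁ • p.1))^[j₁] f (p.2 + v p.1)‖ₑ * ‖(fwdDiff (k₂ • p.1))^[j₂] g (p.2 + w p.1)‖ₑ)

lemma measurable_FF {n : ℕ} (β : ℝ) (k₁ j₁ k₂ j₂ : ℕ) {f g : Euc n → ℂ} (hf : IsTest f)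
    (hg : IsTest g) (v w : Euc n → Euc n) (hv : Continuous v) (hw : Continuous w) :
    Measurable (FF β k₁ j₁ k₂ j₂ f g v w) := by
  have hwm : ∀ t : ℝ, Measurable (fun y : Euc n => ENNReal.ofReal (‖y‖ ^ t)) := fun t =>
    (measurable_norm.pow_const _).ennreal_ofReal
  have ma := (continuous_diff hf.1.continuous k₁ j₁ v hv).measurable.enorm
  have mb := (continuous_diff hg.1.continuous k₂ j₂ w hw).measurable.enorm
  exact ((hwm (-(n : ℝ) - β)).comp measurable_fst).mul (ma.mul mb)

lemma B_bound {n : ℕ} (hn : 1 ≤ n) (k₁ j₁ k₂ j₂ : ℕ) (β s₁ s₂ : ℝ) (hs₁ : 0 < s₁)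
    (hs₂ : 0 < s₂) (hj₁ : s₁ < 2 * j₁) (hj₂ : s₂ < 2 * j₂) (hs : s₁ + s₂ = 2 * β) :
    ∃ C : ℝ≥0∞, C ≠ ⊤ ∧ ∀ f g : Euc n → ℂ, IsTest f → IsTest g → ∀ v w : Euc n → Euc n,
      Continuous v → Continuous w →
      ∫⁻ p : Euc n × Euc n, FF β k₁ j₁ k₂ j₂ f g v w p ∂(volume.prod volume)
      ≤ C * (W β f * W β g) := by
  obtain ⟨C₁, hC₁, h₁⟩ := Q_bound hn k₁ j₁ β s₁ hs₁ hj₁ (by linarith)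
  obtain ⟨C₂, hC₂, h₂⟩ := Q_bound hn k₂ j₂ β s₂ hs₂ hj₂ (by linarith)
  refine ⟨C₁ ^ (1/2:ℝ) * C₂ ^ (1/2:ℝ), ENNReal.mul_ne_top (by simp [hC₁]) (by simp [hC₂]),
    fun f g hf hg v w hv hw => ?_⟩
  have hwm : ∀ t : ℝ, Measurable (fun y : Euc n => ENNReal.ofReal (‖y‖ ^ t)) := fun t =>
    (measurable_norm.pow_const _).ennreal_ofReal
  have ma := (continuous_diff hf.1.continuous k₁ j₁ v hv).measurable.enorm
  have mb := (continuous_diff hg.1.continuous k₂ j₂ w hw).measurable.enorm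
  have m1 := ((hwm ((-(n : ℝ) - s₁) / 2)).comp measurable_fst).mul ma
  have m2 := ((hwm ((-(n : ℝ) - s₂) / 2)).comp measurable_fst).mul mb
  have hn0 : (1:ℝ) ≤ n := by exact_mod_cast hn
  have hol := ENNReal.lintegral_mul_le_Lp_mul_Lq ((volume : Measure (Euc n)).prod volume)
    Real.HolderConjugate.two_two m1.aemeasurable m2.aemeasurable
  refine (le_of_eq ?_).trans (hol.trans ?_)
  · refine lintegral_congr fun p => ?_
    simp only [Pi.mul_apply, Function.comp, FF]
    have : ‖p.1‖ ^ (-(n : ℝ) - β) = ‖p.1‖ ^ ((-(n : ℝ) - s₁) / 2) * ‖p.1‖ ^ ((-(n : ℝ) - s₂) / 2) := by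
      rw [← Real.rpow_add' (norm_nonneg _) (by linarith)]
      congr 1
      linarith
    rw [this, ENNReal.ofReal_mul (by positivity)]
    ring
  · have b1 := ENNReal.rpow_le_rpow (h₁ f hf v hv) (by norm_num : (0:ℝ) ≤ 1/2)
    have b2 := ENNReal.rpow_le_rpow (h₂ g hg w hw) (by norm_num : (0:ℝ) ≤ 1/2)
    refine (mul_le_mul' b1 b2).trans (le_of_eq ?_)
    rw [ENNReal.mul_rpow_of_nonneg _ _ (by norm_num : (0:ℝ) ≤ 1/2),
      ENNReal.mul_rpow_of_nonneg _ _ (by norm_num : (0:ℝ) ≤ 1/2), ← ENNReal.rpow_mul, ← ENNReal.rpow_mul]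
    norm_num
    ring

lemma enorm_Dk {n : ℕ} (k : ℕ) (f : Euc n → ℂ) (y x : Euc n) :
    ‖Dk k f y x‖ₑ = ‖(fwdDiff (1 • y))^[2 * k] f (x + (-(k • y)))‖ₑ := by
  rw [Dk, enorm_mul, enorm_pow, enorm_neg, enorm_one, one_pow, one_mul, one_smul]

lemma R_bound {n : ℕ} (hn : 1 ≤ n) (k : ℕ) (hk1 : 1 ≤ k) (β : ℝ) (hβ : 0 < β) (hk : β < 2 * k) :
    ∃ C : ℝ≥0∞, C ≠ ⊤ ∧ ∀ f g : Euc n → ℂ, IsTest f → IsTest g →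
      ∫⁻ x : Euc n, ∫⁻ y : Euc n, ENNReal.ofReal (‖y‖ ^ (-(n : ℝ) - β)) *
        ‖Dk k (fun x => f x * g x) y x - f x * Dk k g y x - g x * Dk k f y x‖ₑ
      ≤ C * (W β f * W β g) := by
  have hk0 : (1:ℝ) ≤ k := by exact_mod_cast hk1
  have hkp : (0:ℝ) < k := by linarith
  have hq0 : 0 < β / k := by positivity
  have hq2 : β / k < 2 := by rw [div_lt_iff₀ hkp]; linarith
  have hqβ : β / k ≤ β := div_le_self hβ.le hk0
  obtain ⟨C₀, hC₀, h₀⟩ := B_bound hn k 1 1 (2 * k) β (β / k) (2 * β - β / k) hq0 (by linarith)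
    (by push_cast; linarith) (by push_cast; linarith) (by ring)
  obtain ⟨C₁, hC₁, h₁⟩ := B_bound hn 1 (2 * k) k 1 β (2 * β - β / k) (β / k) (by linarith) hq0
    (by push_cast; linarith) (by push_cast; linarith) (by ring)
  have hB : ∀ i : ℕ, ∃ C : ℝ≥0∞, C ≠ ⊤ ∧ (i ∈ Finset.Ico 1 (2 * k) → ∀ f g : Euc n → ℂ, IsTest f → IsTest g →
      ∀ v w : Euc n → Euc n, Continuous v → Continuous w →
      ∫⁻ p : Euc n × Euc n, FF β 1 i 1 (2 * k - i) f g v w p ∂(volume.prod volume)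
      ≤ C * (W β f * W β g)) := by
    intro i
    by_cases hi : i ∈ Finset.Ico 1 (2 * k)
    · rw [Finset.mem_Ico] at hi
      have hi1 : (1:ℝ) ≤ i := by exact_mod_cast hi.1
      have hi2 : (i:ℝ) + 1 ≤ 2 * k := by exact_mod_cast hi.2
      have hcast : ((2 * k - i : ℕ) : ℝ) = 2 * k - i := by
        rw [Nat.cast_sub hi.2.le]; push_cast; ring
      have hkk : β / k * k = β := by field_simp
      obtain ⟨C, hC, h⟩ := B_bound hn 1 i 1 (2 * k - i) β (β / k * i) (β / k * (2 * k - i))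
        (by positivity) (mul_pos hq0 (by linarith)) (by nlinarith)
        (by rw [hcast]; nlinarith) (by linear_combination 2 * hkk)
      exact ⟨C, hC, fun _ => h⟩
    · exact ⟨0, by simp, fun h => absurd h hi⟩
  choose Cs hCs hs using hB
  refine ⟨C₀ + C₁ + ∑ i ∈ Finset.Ico 1 (2 * k), ((2 * k).choose i : ℝ≥0∞) * Cs i, ?_, ?_⟩
  · refine ENNReal.add_ne_top.2 ⟨ENNReal.add_ne_top.2 ⟨hC₀, hC₁⟩, ?_⟩
    refine ENNReal.sum_ne_top.2 fun i _ => ENNReal.mul_ne_top (by simp) (hCs i)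
  intro f g hf hg
  set F0 := FF (n := n) β k 1 1 (2 * k) f g (fun _ => 0) (fun y => -(k • y)) with hF0
  set F1 := FF (n := n) β 1 (2 * k) k 1 f g (fun y => -(k • y)) (fun y => -(k • y)) with hF1
  set Fi : ℕ → Euc n × Euc n → ℝ≥0∞ := fun i => FF (n := n) β 1 i 1 (2 * k - i) f g
    (fun y => -(k • y) + (2 * k - i) • y) (fun y => -(k • y)) with hFi
  have c0 : Continuous (fun _ : Euc n => (0 : Euc n)) := continuous_const
  have c1 : Continuous (fun y : Euc n => -(k • y)) := by fun_prop
  have c2 : ∀ i, Continuous (fun y : Euc n => -(k • y) + (2 * k - i) • y) := fun i => by fun_prop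
  have m0 : Measurable F0 := measurable_FF β _ _ _ _ hf hg _ _ c0 c1
  have m1 : Measurable F1 := measurable_FF β _ _ _ _ hf hg _ _ c1 c1
  have mi : ∀ i, Measurable (Fi i) := fun i => measurable_FF β _ _ _ _ hf hg _ _ (c2 i) c1
  set G : Euc n × Euc n → ℝ≥0∞ := fun p => F0 p + F1 p +
    ∑ i ∈ Finset.Ico 1 (2 * k), ((2 * k).choose i : ℝ≥0∞) * Fi i p with hG
  have mG : Measurable G := (m0.add m1).add
    (Finset.measurable_sum _ fun i _ => (mi i).const_mul _)
  have hpt : ∀ x y : Euc n, ENNReal.ofReal (‖y‖ ^ (-(n : ℝ) - β)) *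
        ‖Dk k (fun x => f x * g x) y x - f x * Dk k g y x - g x * Dk k f y x‖ₑ ≤ G (y, x) := by
    intro x y
    rw [Dk_mul k hk1]
    have t : ∀ a b c : ℂ, ‖a - b + c‖ₑ ≤ ‖a‖ₑ + ‖b‖ₑ + ‖c‖ₑ := fun a b c =>
      (enorm_add_le _ _).trans (add_le_add (enorm_sub_le) le_rfl)
    refine (mul_le_mul_right (t _ _ _) _).trans ?_
    rw [mul_add, mul_add]
    refine add_le_add (add_le_add (le_of_eq ?_) (le_of_eq ?_)) ?_
    · rw [enorm_mul, enorm_Dk]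
      simp [hF0, FF]
    · rw [enorm_mul, enorm_Dk]
      simp [hF1, FF]
    · rw [enorm_mul, enorm_pow, enorm_neg, enorm_one, one_pow, one_mul]
      refine (mul_le_mul_right (enorm_sum_le _ _) _).trans ?_
      rw [Finset.mul_sum]
      refine Finset.sum_le_sum fun i _ => le_of_eq ?_
      have hcst : ‖((2 * k).choose i : ℂ)‖ₑ = ((2 * k).choose i : ℝ≥0∞) := by
        rw [← ofReal_norm, Complex.norm_natCast, ENNReal.ofReal_natCast]
      rw [enorm_mul, enorm_mul, hcst]
      simp only [hFi, FF, one_smul]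
      ring
  calc _ ≤ ∫⁻ x : Euc n, ∫⁻ y : Euc n, G (y, x) := lintegral_mono fun x => lintegral_mono fun y => hpt x y
    _ = ∫⁻ p, G p ∂(volume.prod volume) := by
        rw [lintegral_prod _ mG.aemeasurable]
        exact lintegral_lintegral_swap (f := fun x y => G (y, x))
          (mG.comp measurable_swap).aemeasurable
    _ = ∫⁻ p, F0 p ∂(volume.prod volume) + ∫⁻ p, F1 p ∂(volume.prod volume)
        + ∑ i ∈ Finset.Ico 1 (2 * k), ((2 * k).choose i : ℝ≥0∞) * ∫⁻ p, Fi i p ∂(volume.prod volume) := by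
        simp only [hG]
        have m01 : Measurable (fun p => F0 p + F1 p) := m0.add m1
        rw [lintegral_add_left m01, lintegral_add_left m0,
          lintegral_finsetSum _ fun i _ => (mi i).const_mul _]
        congr 1
        refine Finset.sum_congr rfl fun i _ => ?_
        rw [lintegral_const_mul _ (mi i)]
    _ ≤ C₀ * (W β f * W β g) + C₁ * (W β f * W β g)
        + ∑ i ∈ Finset.Ico 1 (2 * k), ((2 * k).choose i : ℝ≥0∞) * (Cs i * (W β f * W β g)) := by
        refine add_le_add (add_le_add (h₀ f g hf hg _ _ c0 c1) (h₁ f g hf hg _ _ c1 c1)) ?_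
        refine Finset.sum_le_sum fun i hi => mul_le_mul_right (hs i hi f g hf hg _ _ (c2 i) c1) _
    _ = _ := by
        rw [add_mul, add_mul, Finset.sum_mul]
        congr 1
        refine Finset.sum_congr rfl fun i _ => ?_
        ring

lemma prod_bound {n : ℕ} (β : ℝ) (hβ : 0 ≤ β) {f g : Euc n → ℂ} (hf : IsTest f) (hg : IsTest g) :
    ∫⁻ x, ‖f x * L0 β g x‖ₑ ≤ W β f * W β g := by
  simp_rw [enorm_mul]
  have hol := ENNReal.lintegral_mul_le_Lp_mul_Lq (volume : Measure (Euc n))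
    Real.HolderConjugate.two_two hf.1.continuous.measurable.enorm.aemeasurable
    (continuous_L0 β hβ hg).measurable.enorm.aemeasurable
  refine hol.trans ?_
  rw [← eLpNorm_two, ← eLpNorm_two]
  exact mul_le_mul' (eLpNorm_le_W β hβ hf) (eLpNorm_L0_le β hβ hg)

lemma main0 {n : ℕ} (hn : 1 ≤ n) (β : ℝ) (hβ : 0 ≤ β) :
    ∃ C : ℝ≥0∞, C ≠ ⊤ ∧ ∀ f g : Euc n → ℂ, IsTest f → IsTest g →
      ∫⁻ x, ‖L0 β (fun x => f x * g x) x‖ₑ ≤ C * (W β f * W β g) := by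
  have hL00 : ∀ u : Euc n → ℂ, IsTest u → L0 0 u = u := by
    intro u hu
    simp only [L0, Real.rpow_zero, Complex.ofReal_one, one_mul]
    exact hu.inversion
  rcases hβ.eq_or_lt with rfl | hβ0
  · refine ⟨1, by simp, fun f g hf hg => ?_⟩
    rw [hL00 _ (hf.mul hg), one_mul]
    have := prod_bound 0 le_rfl hf hg
    rwa [hL00 g hg] at this
  obtain ⟨k, hk⟩ := exists_nat_gt β
  have hk1 : 1 ≤ k := by
    have : (0:ℝ) < k := hβ0.trans hk
    exact_mod_cast this
  have hk2 : β < 2 * k := by linarith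
  obtain ⟨c, hc0, hc⟩ := kap_integral hn k β hβ0 hk2
  obtain ⟨C, hC, hR⟩ := R_bound hn k hk1 β hβ0 hk2
  refine ⟨1 + 1 + ENNReal.ofReal c⁻¹ * C, ?_, fun f g hf hg => ?_⟩
  · exact ENNReal.add_ne_top.2 ⟨by simp, ENNReal.mul_ne_top ENNReal.ofReal_ne_top hC⟩
  set R : Euc n → Euc n → ℂ := fun x y =>
    Dk k (fun x => f x * g x) y x - f x * Dk k g y x - g x * Dk k f y x with hRdef
  have hpt : ∀ x, ‖L0 β (fun x => f x * g x) x‖ₑ ≤ ‖f x * L0 β g x‖ₑ + ‖g x * L0 β f x‖ₑ +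
      ENNReal.ofReal c⁻¹ * ∫⁻ y : Euc n, ENNReal.ofReal (‖y‖ ^ (-(n : ℝ) - β)) * ‖R x y‖ₑ := by
    intro x
    obtain ⟨i1, e1⟩ := rep hn k β hβ0 hk2 c hc (hf.mul hg) x
    obtain ⟨i2, e2⟩ := rep hn k β hβ0 hk2 c hc hg x
    obtain ⟨i3, e3⟩ := rep hn k β hβ0 hk2 c hc hf x
    have e4 : ∫ y : Euc n, ((‖y‖ ^ (-(n : ℝ) - β) : ℝ) : ℂ) * R x y =
        c * L0 β (fun x => f x * g x) x - f x * (c * L0 β g x) - g x * (c * L0 β f x) := by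
      have i12 : Integrable (fun y : Euc n =>
          ((‖y‖ ^ (-(n:ℝ) - β) : ℝ) : ℂ) * Dk k (fun x => f x * g x) y x
          - f x * (((‖y‖ ^ (-(n:ℝ) - β) : ℝ) : ℂ) * Dk k g y x)) := i1.sub (i2.const_mul _)
      rw [← e1, ← e2, ← e3, ← integral_const_mul, ← integral_const_mul,
        ← integral_sub i1 (i2.const_mul _), ← integral_sub i12 (i3.const_mul _)]
      refine integral_congr_ae (ae_of_all _ fun y => ?_)
      simp only [hRdef]
      ring
    have hcC : (c : ℂ) ≠ 0 := by exact_mod_cast hc0.ne'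
    have e5 : L0 β (fun x => f x * g x) x = f x * L0 β g x + g x * L0 β f x +
        ((c⁻¹ : ℝ) : ℂ) * ∫ y : Euc n, ((‖y‖ ^ (-(n : ℝ) - β) : ℝ) : ℂ) * R x y := by
      rw [e4]
      push_cast
      field_simp
      ring
    rw [e5]
    refine (enorm_add_le _ _).trans (add_le_add (enorm_add_le _ _) ?_)
    have hco : ∀ r : ℝ, 0 ≤ r → ‖(r : ℂ)‖ₑ = ENNReal.ofReal r := fun r hr => by
      rw [← ofReal_norm, Complex.norm_real, Real.norm_of_nonneg hr]
    rw [enorm_mul, hco _ (by positivity)]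
    refine mul_le_mul_right ((enorm_integral_le_lintegral_enorm _).trans (le_of_eq ?_)) _
    refine lintegral_congr fun y => ?_
    rw [enorm_mul, hco _ (by positivity)]
  have mA : Measurable (fun x => ‖f x * L0 β g x‖ₑ) :=
    (hf.1.continuous.mul (continuous_L0 β hβ hg)).measurable.enorm
  have mB : Measurable (fun x => ‖g x * L0 β f x‖ₑ) :=
    (hg.1.continuous.mul (continuous_L0 β hβ hf)).measurable.enorm
  refine (lintegral_mono hpt).trans ?_
  have mAB : Measurable (fun x => ‖f x * L0 β g x‖ₑ + ‖g x * L0 β f x‖ₑ) := mA.add mB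
  rw [lintegral_add_left mAB, lintegral_add_left mA,
    lintegral_const_mul' _ _ ENNReal.ofReal_ne_top, add_mul, add_mul, one_mul, mul_assoc]
  refine add_le_add (add_le_add (prod_bound β hβ hf hg) ?_) (mul_le_mul_right (hR f g hf hg) _)
  rw [mul_comm (W β f)]
  exact prod_bound β hβ hg hf

lemma ft_eq {n : ℕ} (f : Euc n → ℂ) (ζ : Euc n) : ft f ((2 * Real.pi) • ζ) = 𝓕 f ζ := by
  rw [Real.fourier_eq', ft]
  refine integral_congr_ae (ae_of_all _ fun x => ?_)
  simp only [smul_eq_mul]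
  rw [real_inner_smul_left, real_inner_comm]
  congr 2
  push_cast
  ring

lemma fracLap_eq {n : ℕ} (β : ℝ) (u : Euc n → ℂ) (x : Euc n) :
    fracLap β u x = (((2 * Real.pi) ^ β : ℝ) : ℂ) * L0 β u x := by
  have hpi : (0:ℝ) < 2 * Real.pi := by positivity
  rw [fracLap, L0, Real.fourierInv_eq']
  have h := Measure.integral_comp_smul (volume : Measure (Euc n))
    (fun ξ : Euc n => Complex.exp (Complex.I * ((⟪ξ, x⟫ : ℝ) : ℂ)) *
      (((‖ξ‖ ^ β : ℝ) : ℂ) * ft u ξ)) (2 * Real.pi)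
  rw [finrank_euclideanSpace_fin, abs_of_pos (by positivity)] at h
  rw [← h, ← integral_const_mul]
  refine integral_congr_ae (ae_of_all _ fun ζ => ?_)
  simp only [smul_eq_mul]
  rw [ft_eq, real_inner_smul_left, norm_smul, Real.norm_of_nonneg hpi.le,
    Real.mul_rpow hpi.le (norm_nonneg _)]
  rw [mul_comm Complex.I]
  push_cast
  ring

lemma W_le {n : ℕ} (β : ℝ) (f : Euc n → ℂ) :
    W β f ≤ eLpNorm (fun ξ : Euc n => (jap ξ ^ β : ℝ) • ft f ξ) 2 volume := by
  have hpi : (2 * Real.pi) ≠ 0 := by positivity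
  set Ψ : Euc n → ℂ := fun ξ : Euc n => (jap ξ ^ β : ℝ) • ft f ξ with hΨ
  have h1 : W β f = eLpNorm (Ψ ∘ fun ξ => (2 * Real.pi) • ξ) 2 volume := by
    rw [W]
    congr 1
    funext ξ
    simp only [hΨ, Function.comp, ft_eq]
  have hemb : MeasurableEmbedding (fun ξ : Euc n => (2 * Real.pi) • ξ) :=
    (Homeomorph.smulOfNeZero (2 * Real.pi) hpi).measurableEmbedding
  rw [h1, ← hemb.eLpNorm_map_measure, Measure.map_addHaar_smul volume hpi]
  refine eLpNorm_mono_measure _ ?_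
  refine Measure.le_iff.2 fun s _ => ?_
  rw [Measure.smul_apply, smul_eq_mul]
  refine mul_le_of_le_one_left (by simp) ?_
  rw [ENNReal.ofReal_le_one, abs_of_nonneg (by positivity)]
  refine inv_le_one_of_one_le₀ (one_le_pow₀ ?_)
  have := Real.pi_gt_three
  linarith

end Stmt11

/-- `‖(-Δ)^{β/2}(fg)‖_{L¹} ≤ C ‖f‖_{W^{β,2}} ‖g‖_{W^{β,2}}` for smooth,
compactly supported `f, g`, where `‖f‖_{W^{β,2}} = ‖⟨·⟩^β f̂‖_{L²}`. -/
theorem stmt11 (n : ℕ) (hn : 1 ≤ n) (β : ℝ) (hβ : 0 ≤ β) :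
    ∃ C : ℝ, 0 < C ∧
      ∀ f g : Euc n → ℂ,
        ContDiff ℝ (⊤ : ℕ∞) f → HasCompactSupport f →
        ContDiff ℝ (⊤ : ℕ∞) g → HasCompactSupport g →
        eLpNorm (fracLap β fun x => f x * g x) 1 volume
          ≤ ENNReal.ofReal C *
            eLpNorm (fun ξ : Euc n => (jap ξ ^ β : ℝ) • ft f ξ) 2 volume *
            eLpNorm (fun ξ : Euc n => (jap ξ ^ β : ℝ) • ft g ξ) 2 volume := by

  obtain ⟨C, hC, h⟩ := Stmt11.main0 hn β hβ
  refine ⟨(2 * Real.pi) ^ β * (C.toReal + 1), by positivity, fun f g hf hf' hg hg' => ?_⟩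
  rw [eLpNorm_one_eq_lintegral_enorm]
  have hco : ∀ r : ℝ, 0 ≤ r → ‖(r : ℂ)‖ₑ = ENNReal.ofReal r := fun r hr => by
    rw [← ofReal_norm, Complex.norm_real, Real.norm_of_nonneg hr]
  have hpi : (0:ℝ) ≤ (2 * Real.pi) ^ β := by positivity
  simp_rw [Stmt11.fracLap_eq, enorm_mul, hco _ hpi]
  rw [lintegral_const_mul' _ _ ENNReal.ofReal_ne_top, ENNReal.ofReal_mul hpi, mul_assoc, mul_assoc]
  refine mul_le_mul_right ((h f g ⟨hf, hf'⟩ ⟨hg, hg'⟩).trans ?_) _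
  refine mul_le_mul' ?_ (mul_le_mul' (Stmt11.W_le β f) (Stmt11.W_le β g))
  rw [ENNReal.le_ofReal_iff_toReal_le hC (by positivity)]
  linarith
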